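/- arXiv:1604.02234 — 4 statements merged into one kernel-verified Lean document; each statement's English description precedes it below -/
import Mathlib

section
/- Let J be a finite index set, s₀ ≥ 0 and s_j ≥ 0 (j ∈ J) be reals, and I_out > 0, I_in > 0 be reals. Set μ = min{1, 1/I_out} and μ' = min{1, 1/I_in}. Then log₂(1 + (μ·s₀ + Σ_{j∈J} s_j + (1 − μ')·I_in)/(1 + μ'·I_in)) ≥ log₂(1 + Σ_{j∈J} s_j + s₀/(1 + I_out) + I_in) − 1. -/
/-!
Let `P = μ s₀ + ∑ s_j`. The interference treated as noise has power `N = μ' I_in ≤ 1`, and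
`1 + (P + I_in - N) / (1 + N) = (1 + P + I_in) / (1 + N)`, so the noise floor `1 + N ≤ 2` costs at
most a factor `2` under the logarithm, that is, one bit. The private signal power `μ s₀` loses
nothing against the outer bound, because `1 / (1 + I_out) ≤ μ`.
-/

open Finset

section LinearOrderedField

variable {K : Type*} [Field K] [LinearOrder K] [IsStrictOrderedRing K]

lemma one_div_one_add_le_min_one_one_div {x : K} (hx : 0 < x) :
    1 / (1 + x) ≤ min 1 (1 / x) :=
  le_min (div_le_one_of_le₀ (by linarith) (by linarith))
    (one_div_le_one_div_of_le hx (by linarith))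

lemma min_one_one_div_mul_self_le_one {x : K} (hx : 0 ≤ x) : min 1 (1 / x) * x ≤ 1 :=
  calc
    min 1 (1 / x) * x ≤ 1 / x * x := by gcongr; exact min_le_right _ _
    _ = x / x := one_div_mul_eq_div x x
    _ ≤ 1 := div_self_le_one x

lemma one_add_le_mul_one_add_sub_div_one_add {a n c : K} (ha : 0 ≤ 1 + a) (hn : 0 < 1 + n)
    (hc : 1 + n ≤ c) : 1 + a ≤ c * (1 + (a - n) / (1 + n)) :=
  calc
    1 + a = (1 + n) * ((1 + a) / (1 + n)) := (mul_div_cancel₀ _ hn.ne').symm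
    _ ≤ c * ((1 + a) / (1 + n)) := by gcongr
    _ = c * (1 + (a - n) / (1 + n)) := by rw [one_add_div hn.ne', add_add_sub_cancel]

end LinearOrderedField

lemma logb_sub_one_le_logb_of_le_mul {b x y : ℝ} (hb : 1 < b) (hx : 0 < x) (hxy : x ≤ b * y) :
    Real.logb b x - 1 ≤ Real.logb b y := by
  have hb₀ : 0 < b := one_pos.trans hb
  calc
    Real.logb b x - 1 = Real.logb b (x / b) := by
      rw [Real.logb_div hx.ne' hb₀.ne', Real.logb_self_eq_one hb]
    _ ≤ Real.logb b y :=
      Real.logb_le_logb_of_le hb (div_pos hx hb₀) ((div_le_iff₀' hb₀).2 hxy)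

theorem one_bit_gap_E_general
    {J : Type*} [Fintype J] {s : J → ℝ} (hs : ∀ j, 0 ≤ s j) {s0 : ℝ} (hs0 : 0 ≤ s0)
    {Iout Iin : ℝ} (hIout : 0 ≤ Iout) (hIin : 0 ≤ Iin)
    {μ μ' : ℝ} (hμ : 1 / (1 + Iout) ≤ μ) (hμ'₀ : 0 ≤ μ') (hμ' : μ' * Iin ≤ 1) :
    Real.logb 2 (1 + (∑ j, s j) + s0 / (1 + Iout) + Iin) - 1 ≤
      Real.logb 2 (1 + (μ * s0 + (∑ j, s j) + (1 - μ') * Iin) / (1 + μ' * Iin)) := by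
  have hsum : 0 ≤ ∑ j, s j := sum_nonneg fun j _ ↦ hs j
  have hprivate : s0 / (1 + Iout) ≤ μ * s0 := by
    rw [← one_div_mul_eq_div]
    gcongr
  have houter : 0 < 1 + (∑ j, s j) + s0 / (1 + Iout) + Iin := by positivity
  refine logb_sub_one_le_logb_of_le_mul one_lt_two houter ?_
  calc
    1 + (∑ j, s j) + s0 / (1 + Iout) + Iin ≤ 1 + (μ * s0 + (∑ j, s j) + Iin) := by linarith
    _ ≤ 2 * (1 + (μ * s0 + (∑ j, s j) + Iin - μ' * Iin) / (1 + μ' * Iin)) :=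
      one_add_le_mul_one_add_sub_div_one_add (by linarith) (by positivity) (by linarith)
    _ = 2 * (1 + (μ * s0 + (∑ j, s j) + (1 - μ') * Iin) / (1 + μ' * Iin)) := by ring

/-- one-bit gap between the inner set function `E` and the outer
set function `Ē` of the Gaussian MAC-IC-MAC, with Etkin–Tse–Wang private-power
fractions `μ = min{1, 1/I_out}` and `μ' = min{1, 1/I_in}`. -/
theorem one_bit_gap_E
    (J : Type*) [Fintype J] (s : J → ℝ) (hs : ∀ j, 0 ≤ s j)
    (s0 : ℝ) (hs0 : 0 ≤ s0)
    (Iout Iin : ℝ) (hIout : 0 < Iout) (hIin : 0 < Iin) :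
    Real.logb 2 (1 + (min 1 (1 / Iout) * s0 + (∑ j, s j) +
        (1 - min 1 (1 / Iin)) * Iin) / (1 + min 1 (1 / Iin) * Iin))
      ≥ Real.logb 2 (1 + (∑ j, s j) + s0 / (1 + Iout) + Iin) - 1 :=
  one_bit_gap_E_general hs hs0 hIout.le hIin.le (one_div_one_add_le_min_one_one_div hIout)
    (by positivity) (min_one_one_div_mul_self_le_one hIin.le)
end

section
/- Let J be a finite index set, s_j ≥ 0 (j ∈ J) be reals, and I_in > 0 be a real. Set μ' = min{1, 1/I_in}. Then log₂(1 + (Σ_{j∈J} s_j + I_in)/(1 + μ'·I_in)) ≥ log₂(1 + Σ_{j∈J} s_j + I_in) − 1. -/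
open Finset

/-!
With the Etkin–Tse–Wang power split the private signal arrives at the other receiver at power
`min I_in 1`, hence no stronger than the unit noise, so the effective noise power is at most `2`.
Dividing only the received power by that noise loses no more than halving the whole argument of the
logarithm, which costs exactly one bit.
-/

section OrderedField

variable {K : Type*} [Field K] [LinearOrder K] [IsStrictOrderedRing K]

lemma min_one_one_div_mul_self {a : K} (ha : 0 < a) : min 1 (1 / a) * a = min a 1 := by
  rw [min_mul_of_nonneg _ _ ha.le, one_mul, one_div_mul_cancel ha.ne']

lemma one_add_div_le_one_add_div {x c d : K} (hx : 0 ≤ x) (hc : 1 ≤ c) (hd : 0 < d)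
    (hdc : d ≤ c) : (1 + x) / c ≤ 1 + x / d := by
  rw [add_div]
  exact add_le_add (div_le_one_of_le₀ hc (zero_le_one.trans hc))
    (div_le_div_of_nonneg_left hx hd hdc)

end OrderedField

lemma logb_one_add_sub_logb_le_logb_one_add_div {b x c d : ℝ} (hb : 1 < b) (hx : 0 ≤ x)
    (hc : 1 ≤ c) (hd : 0 < d) (hdc : d ≤ c) :
    Real.logb b (1 + x) - Real.logb b c ≤ Real.logb b (1 + x / d) := by
  have hc₀ : 0 < c := zero_lt_one.trans_le hc
  rw [← Real.logb_div (by positivity) hc₀.ne']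
  exact Real.logb_le_logb_of_le hb (by positivity) (one_add_div_le_one_add_div hx hc hd hdc)

/-- one-bit gap between the inner set function `G` and the outer
set function `Ḡ` of the Gaussian MAC-IC-MAC, with Etkin–Tse–Wang private-power
fraction `μ' = min{1, 1/I_in}`. -/
theorem one_bit_gap_G
    (J : Type*) [Fintype J] (s : J → ℝ) (hs : ∀ j, 0 ≤ s j)
    (Iin : ℝ) (hIin : 0 < Iin) :
    Real.logb 2 (1 + ((∑ j, s j) + Iin) / (1 + min 1 (1 / Iin) * Iin))
      ≥ Real.logb 2 (1 + (∑ j, s j) + Iin) - 1 := by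
  have received_nonneg : 0 ≤ (∑ j, s j) + Iin :=
    add_nonneg (sum_nonneg fun j _ ↦ hs j) hIin.le
  have noise_pos : 0 < 1 + min Iin 1 := by positivity
  have noise_le_two : 1 + min Iin 1 ≤ 2 := by linarith [min_le_right Iin 1]
  have gap := logb_one_add_sub_logb_le_logb_one_add_div one_lt_two received_nonneg
    one_le_two noise_pos noise_le_two
  rwa [Real.logb_self_eq_one one_lt_two, ← add_assoc, ← min_one_one_div_mul_self hIin] at gap
end

section
/- Fix an integer K ≥ 2 and a real α ≥ 0 with either α ≤ 1 − 1/K or α ≥ 1 + 1/K, and let both cells have K users with the symmetric GDoF set functions a(Υ) = (1−α)⁺ if Υ = {0} and a(Υ) = 1 otherwise, b(Ω) = 1, e(Υ) = max{a(Υ), α}, g(Ω) = max{1, α}. Then the all-equal rate tuple with every coordinate equal to 1/K satisfies all seven generic inequality families; that is, each cell achieves a full degree of freedom (total symmetric GDoF 1 per cell) in the sufficiently weak (α ≤ 1 − 1/K) and sufficiently strong (α ≥ 1 + 1/K) interference regimes. -/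
/-!
Since `(1 - α)⁺ + max{1, α} = 1 + |1 - α|`, the two interference regimes together say exactly that
the rate `1/K` of the interfering user is at most `|1 - α|`. If moreover a cell's total rate is at
most `1`, then `R_Ω ≤ 1`, `R_Υ + 1 ≤ a(Υ) + g(Ω)` and `R_Υ ≤ e(Υ)`: for `Υ = {0}` only the rate of
the interfering user counts, and otherwise `a(Υ) = 1`. All seven families are sums of these bounds.
-/

open Finset

/-- The seven generic inequality families of the MAC-IC-MAC region. -/
def GenericRegion {na nb : ℕ} [NeZero na] [NeZero nb]
    (Ra : Fin na → ℝ) (Rb : Fin nb → ℝ)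
    (Aa Ba Ea Ga : Finset (Fin na) → ℝ)
    (Ab Bb Eb Gb : Finset (Fin nb) → ℝ) : Prop :=
  ∀ (Υa Ωa : Finset (Fin na)) (Υb Ωb : Finset (Fin nb)),
    0 ∈ Υa → Ωa.Nonempty → 0 ∈ Υb → Ωb.Nonempty →
      (∑ j ∈ Ωa, Ra j) ≤ Ba Ωa ∧
      (∑ j ∈ Ωb, Rb j) ≤ Bb Ωb ∧
      (∑ j ∈ Υa, Ra j) + (∑ j ∈ Ωb, Rb j) ≤ Aa Υa + Gb Ωb ∧
      (∑ j ∈ Ωa, Ra j) + (∑ j ∈ Υb, Rb j) ≤ Ab Υb + Ga Ωa ∧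
      (∑ j ∈ Υa, Ra j) + (∑ j ∈ Υb, Rb j) ≤ Ea Υa + Eb Υb ∧
      (∑ j ∈ Υa, Ra j) + (∑ j ∈ Ωa, Ra j) + (∑ j ∈ Υb, Rb j)
        ≤ Aa Υa + Ga Ωa + Eb Υb ∧
      (∑ j ∈ Υa, Ra j) + (∑ j ∈ Ωb, Rb j) + (∑ j ∈ Υb, Rb j)
        ≤ Ab Υb + Gb Ωb + Ea Υa

/-- Symmetric GDoF set function `a(Υ)`: `(1−α)⁺` if `Υ = {0}`, else `1`. -/
noncomputable def symA {K : ℕ} [NeZero K] (α : ℝ) (Υ : Finset (Fin K)) : ℝ :=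
  if Υ = {0} then max (1 - α) 0 else 1

/-- Symmetric GDoF set function `b(Ω) = 1`. -/
noncomputable def symB {K : ℕ} (_Ω : Finset (Fin K)) : ℝ := 1

/-- Symmetric GDoF set function `e(Υ) = max{a(Υ), α}`. -/
noncomputable def symE {K : ℕ} [NeZero K] (α : ℝ) (Υ : Finset (Fin K)) : ℝ :=
  max (symA α Υ) α

/-- Symmetric GDoF set function `g(Ω) = max{1, α}`. -/
noncomputable def symG {K : ℕ} (α : ℝ) (_Ω : Finset (Fin K)) : ℝ := max 1 α

theorem max_one_sub_zero_add_max_one (α : ℝ) : max (1 - α) 0 + max 1 α = 1 + |1 - α| := by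
  rcases le_total α 1 with h | h
  · rw [max_eq_left (sub_nonneg.2 h), max_eq_left h, abs_of_nonneg (sub_nonneg.2 h), add_comm]
  · rw [max_eq_right (sub_nonpos.2 h), max_eq_right h, abs_of_nonpos (sub_nonpos.2 h)]
    ring

theorem abs_one_sub_le_max (α : ℝ) : |1 - α| ≤ max (1 - α) α :=
  abs_le'.2 ⟨le_max_left _ _, le_max_of_le_right (by linarith)⟩

theorem le_abs_one_sub_iff {x α : ℝ} : x ≤ |1 - α| ↔ α ≤ 1 - x ∨ 1 + x ≤ α := by
  rw [le_abs, neg_sub, le_sub_comm, le_sub_iff_add_le' (a := 1)]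

theorem sum_univ_fin_one_div (K : ℕ) [NeZero K] : ∑ _j : Fin K, 1 / (K : ℝ) = 1 := by
  rw [sum_const, card_fin, nsmul_eq_mul, mul_one_div_cancel (NeZero.ne _)]

section SingleCell

variable {K : ℕ} [NeZero K] {R : Fin K → ℝ} {α : ℝ} {Υ : Finset (Fin K)}

theorem sum_add_one_le_symA_add_symG {L : ℕ} (hΥ : ∑ j ∈ Υ, R j ≤ 1) (h0 : R 0 ≤ |1 - α|)
    (Ω : Finset (Fin L)) : ∑ j ∈ Υ, R j + 1 ≤ symA α Υ + symG α Ω := by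
  unfold symA symG
  split_ifs with h
  · rw [h, sum_singleton, max_one_sub_zero_add_max_one]
    linarith
  · exact add_le_add hΥ (le_max_left 1 α)

theorem sum_le_symE (hΥ : ∑ j ∈ Υ, R j ≤ 1) (h0 : R 0 ≤ |1 - α|) :
    ∑ j ∈ Υ, R j ≤ symE α Υ := by
  unfold symE symA
  split_ifs with h
  · rw [h, sum_singleton]
    exact (h0.trans (abs_one_sub_le_max α)).trans (max_le_max_right α (le_max_left _ _))
  · exact le_max_of_le_left hΥ

end SingleCell

theorem symmetric_gdof_full_dof_shoulders_general {na nb : ℕ} [NeZero na] [NeZero nb]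
    {Ra : Fin na → ℝ} {Rb : Fin nb → ℝ} {α : ℝ}
    (hRa : ∀ j, 0 ≤ Ra j) (hRb : ∀ j, 0 ≤ Rb j)
    (hsum_a : ∑ j, Ra j ≤ 1) (hsum_b : ∑ j, Rb j ≤ 1)
    (h0a : Ra 0 ≤ |1 - α|) (h0b : Rb 0 ≤ |1 - α|) :
    GenericRegion Ra Rb
      (symA α) symB (symE α) (symG α)
      (symA α) symB (symE α) (symG α) := by
  intro Υa Ωa Υb Ωb _ _ _ _
  have one_a (Ω : Finset (Fin na)) : ∑ j ∈ Ω, Ra j ≤ 1 :=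
    (sum_le_univ_sum_of_nonneg hRa).trans hsum_a
  have one_b (Ω : Finset (Fin nb)) : ∑ j ∈ Ω, Rb j ≤ 1 :=
    (sum_le_univ_sum_of_nonneg hRb).trans hsum_b
  have symE_a := sum_le_symE (one_a Υa) h0a
  have symE_b := sum_le_symE (one_b Υb) h0b
  have symAG_aa := sum_add_one_le_symA_add_symG (one_a Υa) h0a Ωa
  have symAG_ab := sum_add_one_le_symA_add_symG (one_a Υa) h0a Ωb
  have symAG_ba := sum_add_one_le_symA_add_symG (one_b Υb) h0b Ωa
  have symAG_bb := sum_add_one_le_symA_add_symG (one_b Υb) h0b Ωb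
  refine ⟨one_a Ωa, one_b Ωb, ?_, ?_, add_le_add symE_a symE_b, ?_, ?_⟩ <;>
    linarith [one_a Ωa, one_b Ωb]

/-- in the sufficiently weak (`α ≤ 1 − 1/K`) and sufficiently
strong (`α ≥ 1 + 1/K`) interference regimes of the symmetric
`K`-user-per-cell Gaussian MAC-IC-MAC (`K = k + 2 ≥ 2`), the all-equal GDoF
tuple with every coordinate `1/K` satisfies all seven generic inequality
families, i.e. each cell achieves a full degree of freedom. -/
theorem symmetric_gdof_full_dof_shoulders
    (k : ℕ) (α : ℝ) (hα : 0 ≤ α)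
    (hreg : α ≤ 1 - 1 / ((k : ℝ) + 2) ∨ 1 + 1 / ((k : ℝ) + 2) ≤ α) :
    GenericRegion (na := k + 2) (nb := k + 2)
      (fun _ => 1 / ((k : ℝ) + 2)) (fun _ => 1 / ((k : ℝ) + 2))
      (symA α) symB (symE α) (symG α)
      (symA α) symB (symE α) (symG α) := by
  have hK : 0 ≤ 1 / ((k : ℝ) + 2) := by positivity
  have hsum : ∑ _j : Fin (k + 2), 1 / ((k : ℝ) + 2) ≤ 1 :=
    mod_cast (sum_univ_fin_one_div (k + 2)).le
  have h0 := le_abs_one_sub_iff.2 hreg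
  exact symmetric_gdof_full_dof_shoulders_general (fun _ => hK) (fun _ => hK) hsum hsum h0 h0
end

section
/- Fix integers K_a, K_b ≥ 1, nonnegative direct-link exponents α_{ij} for i ∈ {a,b}, j ∈ {0,…,K_i−1}, and nonnegative cross-link exponents β_a, β_b (β_i is the exponent of the INR caused by transmitter i0 at the other receiver). Define the GDoF set functions of cell i (writing i' for the other cell): a_i(Υ) = max{max_{j∈Υ\{0}} α_{ij}, (α_{i0} − β_i)⁺} (the inner max interpreted as (α_{i0} − β_i)⁺ when Υ = {0}), b_i(Ω) = max_{j∈Ω} α_{ij}, e_i(Υ) = max{a_i(Υ), β_{i'}}, g_i(Ω) = max{b_i(Ω), β_{i'}}. Suppose a componentwise nonnegative GDoF tuple (d_a, d_b) ∈ ℝ^{K_a} × ℝ^{K_b} satisfies every one of the seven generic inequality families for (a, b, e, g) with strict inequality. Then there exists ρ₀ > 1 such that for every ρ ≥ ρ₀, the rate tuple with coordinates R_{ij} = d_{ij}·log₂(ρ) satisfies all seven generic inequality families for the inner Gaussian set functions (A_i, B_i, E_i, G_i) evaluated at SNR_{ij} = ρ^{α_{ij}} and INR_i = ρ^{β_i}.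 -/
open Finset

/-- `C(x) = log₂(1+x)`. -/
noncomputable def gaussC (x : ℝ) : ℝ := Real.logb 2 (1 + x)

/-- The seven generic inequality families, with every inequality strict. -/
def GenericRegionStrict {na nb : ℕ} [NeZero na] [NeZero nb]
    (Ra : Fin na → ℝ) (Rb : Fin nb → ℝ)
    (Aa Ba Ea Ga : Finset (Fin na) → ℝ)
    (Ab Bb Eb Gb : Finset (Fin nb) → ℝ) : Prop :=
  ∀ (Υa Ωa : Finset (Fin na)) (Υb Ωb : Finset (Fin nb)),
    0 ∈ Υa → Ωa.Nonempty → 0 ∈ Υb → Ωb.Nonempty →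
      (∑ j ∈ Ωa, Ra j) < Ba Ωa ∧
      (∑ j ∈ Ωb, Rb j) < Bb Ωb ∧
      (∑ j ∈ Υa, Ra j) + (∑ j ∈ Ωb, Rb j) < Aa Υa + Gb Ωb ∧
      (∑ j ∈ Ωa, Ra j) + (∑ j ∈ Υb, Rb j) < Ab Υb + Ga Ωa ∧
      (∑ j ∈ Υa, Ra j) + (∑ j ∈ Υb, Rb j) < Ea Υa + Eb Υb ∧
      (∑ j ∈ Υa, Ra j) + (∑ j ∈ Ωa, Ra j) + (∑ j ∈ Υb, Rb j)
        < Aa Υa + Ga Ωa + Eb Υb ∧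
      (∑ j ∈ Υa, Ra j) + (∑ j ∈ Ωb, Rb j) + (∑ j ∈ Υb, Rb j)
        < Ab Υb + Gb Ωb + Ea Υa

/-- Maximum of `f` over a finset, with base point `0` (so the empty maximum
is `0`). -/
def finMaxOn {n : ℕ} (f : Fin n → ℝ) (S : Finset (Fin n)) : ℝ :=
  S.fold max 0 f

/-- GDoF set function `a(Υ) = max{max_{j∈Υ\{0}} α_j, (α₀ − β_own)⁺}`. -/
noncomputable def gdofA {n : ℕ} [NeZero n] (αv : Fin n → ℝ) (βown : ℝ)
    (Υ : Finset (Fin n)) : ℝ :=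
  max (finMaxOn αv (Υ.erase 0)) (max (αv 0 - βown) 0)

/-- GDoF set function `b(Ω) = max_{j∈Ω} α_j`. -/
noncomputable def gdofB {n : ℕ} (αv : Fin n → ℝ) (Ω : Finset (Fin n)) : ℝ :=
  finMaxOn αv Ω

/-- GDoF set function `e(Υ) = max{a(Υ), β_other}`. -/
noncomputable def gdofE {n : ℕ} [NeZero n] (αv : Fin n → ℝ) (βown βoth : ℝ)
    (Υ : Finset (Fin n)) : ℝ :=
  max (gdofA αv βown Υ) βoth

/-- GDoF set function `g(Ω) = max{b(Ω), β_other}`. -/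
noncomputable def gdofG {n : ℕ} (αv : Fin n → ℝ) (βoth : ℝ)
    (Ω : Finset (Fin n)) : ℝ :=
  max (gdofB αv Ω) βoth

/-- Inner Gaussian set function `A` of a cell with direct SNRs `SNR`,
outgoing INR `Iout` and incoming INR `Iin`. -/
noncomputable def innerA {n : ℕ} [NeZero n] (SNR : Fin n → ℝ) (Iout Iin : ℝ)
    (Υ : Finset (Fin n)) : ℝ :=
  gaussC ((min 1 (1 / Iout) * SNR 0 + ∑ j ∈ Υ.erase 0, SNR j) /
    (1 + min 1 (1 / Iin) * Iin))

/-- Inner Gaussian set function `B`. -/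
noncomputable def innerB {n : ℕ} (SNR : Fin n → ℝ) (Iin : ℝ)
    (Ω : Finset (Fin n)) : ℝ :=
  gaussC ((∑ j ∈ Ω, SNR j) / (1 + min 1 (1 / Iin) * Iin))

/-- Inner Gaussian set function `E`. -/
noncomputable def innerE {n : ℕ} [NeZero n] (SNR : Fin n → ℝ) (Iout Iin : ℝ)
    (Υ : Finset (Fin n)) : ℝ :=
  gaussC ((min 1 (1 / Iout) * SNR 0 + (∑ j ∈ Υ.erase 0, SNR j) +
    (1 - min 1 (1 / Iin)) * Iin) / (1 + min 1 (1 / Iin) * Iin))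

/-- Inner Gaussian set function `G`. -/
noncomputable def innerG {n : ℕ} (SNR : Fin n → ℝ) (Iin : ℝ)
    (Ω : Finset (Fin n)) : ℝ :=
  gaussC (((∑ j ∈ Ω, SNR j) + Iin) / (1 + min 1 (1 / Iin) * Iin))

/-!
At `ρ ≥ 1` every interference power `ρ ^ β` is at least `1`, so the private power fraction is
`μ = 1 / INR` and the effective noise `1 + μ · INR` equals `2`. Each inner Gaussian set function is
then `log₂ (1 + X / 2)`, where `1 + X / 2` is at least a fixed fraction of `ρ ^ v`, with `v` the
matching GDoF set function; so it is at least `v · log₂ ρ - O(1)`. Every inequality of the region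
therefore loses only a bounded number of bits, while the slack of a strict GDoF inequality grows
like `log₂ ρ`. As there are finitely many inequalities, one threshold serves them all.
-/

open Filter

/-- The family of rates `V ρ` has generalized degrees of freedom at least `v`. The loss against
`v * log₂ ρ` is required to be bounded, rather than `o(log ρ)` as in the definition of GDoF by a
limit: this is stronger, and it is the form in which the Gaussian bounds arise. -/
def HasGDoFAtLeast (v : ℝ) (V : ℝ → ℝ) : Prop :=
  ∃ c : ℝ, ∀ᶠ ρ : ℝ in atTop, v * Real.logb 2 ρ - c ≤ V ρ

namespace HasGDoFAtLeast

variable {u v K : ℝ} {U V X : ℝ → ℝ}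

lemma add (hU : HasGDoFAtLeast u U) (hV : HasGDoFAtLeast v V) :
    HasGDoFAtLeast (u + v) (fun ρ => U ρ + V ρ) := by
  obtain ⟨c, hc⟩ := hU
  obtain ⟨d, hd⟩ := hV
  refine ⟨c + d, ?_⟩
  filter_upwards [hc, hd] with ρ hcρ hdρ
  linarith

lemma eventually_mul_logb_le (hV : HasGDoFAtLeast v V) (huv : u < v) :
    ∀ᶠ ρ : ℝ in atTop, u * Real.logb 2 ρ ≤ V ρ := by
  obtain ⟨c, hc⟩ := hV
  filter_upwards [hc,
    (Real.tendsto_logb_atTop one_lt_two).eventually_ge_atTop (c / (v - u))] with ρ hcρ hρ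
  have slack : c ≤ Real.logb 2 ρ * (v - u) := (div_le_iff₀ (sub_pos.2 huv)).1 hρ
  linarith

lemma gaussC_of_rpow_le (hK : 0 < K) (hX : ∀ᶠ ρ : ℝ in atTop, ρ ^ v ≤ K * (1 + X ρ)) :
    HasGDoFAtLeast v (fun ρ => gaussC (X ρ)) := by
  refine ⟨Real.logb 2 K, ?_⟩
  filter_upwards [hX, eventually_gt_atTop 0] with ρ hXρ hρ
  have hpow : 0 < ρ ^ v := Real.rpow_pos_of_pos hρ v
  calc v * Real.logb 2 ρ - Real.logb 2 K
      = Real.logb 2 (ρ ^ v / K) := by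
        rw [Real.logb_div hpow.ne' hK.ne', Real.logb_rpow_eq_mul_logb_of_pos hρ]
    _ ≤ gaussC (X ρ) :=
        Real.logb_le_logb_of_le one_lt_two (div_pos hpow hK) ((div_le_iff₀' hK).2 hXρ)

end HasGDoFAtLeast

theorem GenericRegionStrict.eventually_genericRegion {na nb : ℕ} [NeZero na] [NeZero nb]
    {da : Fin na → ℝ} {db : Fin nb → ℝ}
    {aa ba ea ga : Finset (Fin na) → ℝ} {ab bb eb gb : Finset (Fin nb) → ℝ}
    {Aa Ba Ea Ga : ℝ → Finset (Fin na) → ℝ} {Ab Bb Eb Gb : ℝ → Finset (Fin nb) → ℝ}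
    (hstrict : GenericRegionStrict da db aa ba ea ga ab bb eb gb)
    (hAa : ∀ S, HasGDoFAtLeast (aa S) (fun ρ => Aa ρ S))
    (hBa : ∀ S, HasGDoFAtLeast (ba S) (fun ρ => Ba ρ S))
    (hEa : ∀ S, HasGDoFAtLeast (ea S) (fun ρ => Ea ρ S))
    (hGa : ∀ S, HasGDoFAtLeast (ga S) (fun ρ => Ga ρ S))
    (hAb : ∀ S, HasGDoFAtLeast (ab S) (fun ρ => Ab ρ S))
    (hBb : ∀ S, HasGDoFAtLeast (bb S) (fun ρ => Bb ρ S))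
    (hEb : ∀ S, HasGDoFAtLeast (eb S) (fun ρ => Eb ρ S))
    (hGb : ∀ S, HasGDoFAtLeast (gb S) (fun ρ => Gb ρ S)) :
    ∀ᶠ ρ : ℝ in atTop, GenericRegion
      (fun j => da j * Real.logb 2 ρ) (fun j => db j * Real.logb 2 ρ)
      (Aa ρ) (Ba ρ) (Ea ρ) (Ga ρ) (Ab ρ) (Bb ρ) (Eb ρ) (Gb ρ) := by
  simp only [GenericRegion, eventually_all, ← Finset.sum_mul, ← add_mul]
  intro Υa Ωa Υb Ωb hΥa hΩa hΥb hΩb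
  obtain ⟨ltBa, ltBb, ltAaGb, ltAbGa, ltEaEb, ltAaGaEb, ltAbGbEa⟩ :=
    hstrict Υa Ωa Υb Ωb hΥa hΩa hΥb hΩb
  simp only [eventually_and]
  exact ⟨(hBa Ωa).eventually_mul_logb_le ltBa,
    (hBb Ωb).eventually_mul_logb_le ltBb,
    ((hAa Υa).add (hGb Ωb)).eventually_mul_logb_le ltAaGb,
    ((hAb Υb).add (hGa Ωa)).eventually_mul_logb_le ltAbGa,
    ((hEa Υa).add (hEb Υb)).eventually_mul_logb_le ltEaEb,
    (((hAa Υa).add (hGa Ωa)).add (hEb Υb)).eventually_mul_logb_le ltAaGaEb,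
    (((hAb Υb).add (hGb Ωb)).add (hEa Υa)).eventually_mul_logb_le ltAbGbEa⟩

lemma rpow_max_le_add {ρ : ℝ} (hρ : 0 ≤ ρ) (x y : ℝ) : ρ ^ max x y ≤ ρ ^ x + ρ ^ y := by
  have hx : 0 ≤ ρ ^ x := Real.rpow_nonneg hρ x
  have hy : 0 ≤ ρ ^ y := Real.rpow_nonneg hρ y
  rcases max_choice x y with h | h <;> rw [h] <;> linarith

section GDoFPowers

variable {n : ℕ} {ρ : ℝ}

-- The summand `1 = ρ ^ 0` accounts for the base point `0` of `finMaxOn`.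
lemma rpow_finMaxOn_le (hρ : 0 ≤ ρ) (α : Fin n → ℝ) (S : Finset (Fin n)) :
    ρ ^ finMaxOn α S ≤ 1 + ∑ j ∈ S, ρ ^ α j := by
  induction S using Finset.induction_on with
  | empty => simp [finMaxOn]
  | insert a S ha ih =>
    calc ρ ^ finMaxOn α (insert a S)
        = ρ ^ max (α a) (finMaxOn α S) := by rw [finMaxOn, Finset.fold_insert ha, finMaxOn]
      _ ≤ ρ ^ α a + ρ ^ finMaxOn α S := rpow_max_le_add hρ _ _
      _ ≤ 1 + ∑ j ∈ insert a S, ρ ^ α j := by rw [Finset.sum_insert ha]; linarith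

lemma rpow_gdofA_le [NeZero n] (hρ : 0 ≤ ρ) (α : Fin n → ℝ) (β : ℝ) (S : Finset (Fin n)) :
    ρ ^ gdofA α β S ≤ 2 + (ρ ^ (α 0 - β) + ∑ j ∈ S.erase 0, ρ ^ α j) := by
  have hmax : ρ ^ gdofA α β S ≤ ρ ^ finMaxOn α (S.erase 0) + ρ ^ max (α 0 - β) 0 :=
    rpow_max_le_add hρ _ _
  have hpos : ρ ^ max (α 0 - β) 0 ≤ ρ ^ (α 0 - β) + 1 := by
    simpa only [Real.rpow_zero] using rpow_max_le_add hρ (α 0 - β) 0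
  linarith [rpow_finMaxOn_le hρ α (S.erase 0)]

end GDoFPowers

lemma min_one_one_div_mul_self_s15 {I : ℝ} (hI : 1 ≤ I) : min 1 (1 / I) * I = 1 := by
  have hpos : 0 < I := one_pos.trans_le hI
  rw [min_eq_right ((div_le_one hpos).2 hI), one_div_mul_cancel hpos.ne']

lemma min_one_one_div_rpow_mul_rpow {ρ β : ℝ} (hρ : 1 ≤ ρ) (hβ : 0 ≤ β) (x : ℝ) :
    min 1 (1 / ρ ^ β) * ρ ^ x = ρ ^ (x - β) := by
  have hpos : 0 < ρ := one_pos.trans_le hρ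
  rw [← sub_add_cancel x β, Real.rpow_add hpos, mul_left_comm,
    min_one_one_div_mul_self_s15 (Real.one_le_rpow hρ hβ), mul_one, add_sub_cancel_right]

section InnerBounds

variable {n : ℕ} {β β' : ℝ}

lemma hasGDoFAtLeast_innerA [NeZero n] (α : Fin n → ℝ) (hβ : 0 ≤ β) (hβ' : 0 ≤ β')
    (S : Finset (Fin n)) :
    HasGDoFAtLeast (gdofA α β S)
      (fun ρ => innerA (fun j => ρ ^ α j) (ρ ^ β) (ρ ^ β') S) := by
  refine .gaussC_of_rpow_le two_pos ?_
  filter_upwards [eventually_ge_atTop 1] with ρ hρ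
  rw [min_one_one_div_mul_self_s15 (Real.one_le_rpow hρ hβ'),
    min_one_one_div_rpow_mul_rpow hρ hβ]
  linarith [rpow_gdofA_le (zero_le_one.trans hρ) α β S]

lemma hasGDoFAtLeast_innerB (α : Fin n → ℝ) (hβ' : 0 ≤ β') (S : Finset (Fin n)) :
    HasGDoFAtLeast (gdofB α S) (fun ρ => innerB (fun j => ρ ^ α j) (ρ ^ β') S) := by
  refine .gaussC_of_rpow_le two_pos ?_
  filter_upwards [eventually_ge_atTop 1] with ρ hρ
  rw [min_one_one_div_mul_self_s15 (Real.one_le_rpow hρ hβ'), gdofB]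
  linarith [rpow_finMaxOn_le (zero_le_one.trans hρ) α S]

lemma hasGDoFAtLeast_innerE [NeZero n] (α : Fin n → ℝ) (hβ : 0 ≤ β) (hβ' : 0 ≤ β')
    (S : Finset (Fin n)) :
    HasGDoFAtLeast (gdofE α β β' S)
      (fun ρ => innerE (fun j => ρ ^ α j) (ρ ^ β) (ρ ^ β') S) := by
  refine .gaussC_of_rpow_le three_pos ?_
  filter_upwards [eventually_ge_atTop 1] with ρ hρ
  have hρ0 : 0 ≤ ρ := zero_le_one.trans hρ
  have hI : 1 ≤ ρ ^ β' := Real.one_le_rpow hρ hβ'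
  have hmax : ρ ^ gdofE α β β' S ≤ ρ ^ gdofA α β S + ρ ^ β' := rpow_max_le_add hρ0 _ _
  have hprivate : 0 ≤ ρ ^ (α 0 - β) := Real.rpow_nonneg hρ0 _
  have hsum : 0 ≤ ∑ j ∈ S.erase 0, ρ ^ α j :=
    Finset.sum_nonneg fun j _ => Real.rpow_nonneg hρ0 (α j)
  rw [sub_mul, min_one_one_div_mul_self_s15 hI, min_one_one_div_rpow_mul_rpow hρ hβ]
  linarith [rpow_gdofA_le hρ0 α β S]

lemma hasGDoFAtLeast_innerG (α : Fin n → ℝ) (hβ' : 0 ≤ β') (S : Finset (Fin n)) :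
    HasGDoFAtLeast (gdofG α β' S) (fun ρ => innerG (fun j => ρ ^ α j) (ρ ^ β') S) := by
  refine .gaussC_of_rpow_le two_pos ?_
  filter_upwards [eventually_ge_atTop 1] with ρ hρ
  have hρ0 : 0 ≤ ρ := zero_le_one.trans hρ
  have hmax : ρ ^ gdofG α β' S ≤ ρ ^ finMaxOn α S + ρ ^ β' := rpow_max_le_add hρ0 _ _
  rw [min_one_one_div_mul_self_s15 (Real.one_le_rpow hρ hβ')]
  linarith [rpow_finMaxOn_le hρ0 α S]

end InnerBounds

theorem gdof_achievability_general {na nb : ℕ} [NeZero na] [NeZero nb]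
    (αa : Fin na → ℝ) (αb : Fin nb → ℝ) {βa βb : ℝ} (hβa : 0 ≤ βa) (hβb : 0 ≤ βb)
    {da : Fin na → ℝ} {db : Fin nb → ℝ}
    (hstrict : GenericRegionStrict da db
      (gdofA αa βa) (gdofB αa) (gdofE αa βa βb) (gdofG αa βb)
      (gdofA αb βb) (gdofB αb) (gdofE αb βb βa) (gdofG αb βa)) :
    ∀ᶠ ρ : ℝ in atTop,
      GenericRegion
        (fun j => da j * Real.logb 2 ρ) (fun j => db j * Real.logb 2 ρ)
        (innerA (fun j => ρ ^ (αa j)) (ρ ^ βa) (ρ ^ βb))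
        (innerB (fun j => ρ ^ (αa j)) (ρ ^ βb))
        (innerE (fun j => ρ ^ (αa j)) (ρ ^ βa) (ρ ^ βb))
        (innerG (fun j => ρ ^ (αa j)) (ρ ^ βb))
        (innerA (fun j => ρ ^ (αb j)) (ρ ^ βb) (ρ ^ βa))
        (innerB (fun j => ρ ^ (αb j)) (ρ ^ βa))
        (innerE (fun j => ρ ^ (αb j)) (ρ ^ βb) (ρ ^ βa))
        (innerG (fun j => ρ ^ (αb j)) (ρ ^ βa)) :=
  hstrict.eventually_genericRegion
    (hasGDoFAtLeast_innerA αa hβa hβb) (hasGDoFAtLeast_innerB αa hβb)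
    (hasGDoFAtLeast_innerE αa hβa hβb) (hasGDoFAtLeast_innerG αa hβb)
    (hasGDoFAtLeast_innerA αb hβb hβa) (hasGDoFAtLeast_innerB αb hβa)
    (hasGDoFAtLeast_innerE αb hβb hβa) (hasGDoFAtLeast_innerG αb hβa)

/-- achievability direction of the GDoF-region theorem for the
Gaussian MAC-IC-MAC.  Any componentwise nonnegative GDoF tuple satisfying all
seven generic inequality families for the GDoF set functions *strictly* is,
for all sufficiently large `ρ`, achieved by the explicit Etkin–Tse–Wang-type
inner bound evaluated at `SNR_{ij} = ρ^{α_{ij}}`, `INR_i = ρ^{β_i}`, with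
rates `R_{ij} = d_{ij}·log₂ ρ`. -/
theorem gdof_achievability
    (Ka Kb : ℕ)
    (αa : Fin (Ka + 1) → ℝ) (αb : Fin (Kb + 1) → ℝ)
    (hαa : ∀ j, 0 ≤ αa j) (hαb : ∀ j, 0 ≤ αb j)
    (βa βb : ℝ) (hβa : 0 ≤ βa) (hβb : 0 ≤ βb)
    (da : Fin (Ka + 1) → ℝ) (db : Fin (Kb + 1) → ℝ)
    (hda : ∀ j, 0 ≤ da j) (hdb : ∀ j, 0 ≤ db j)
    (hstrict : GenericRegionStrict da db
      (gdofA αa βa) (gdofB αa) (gdofE αa βa βb) (gdofG αa βb)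
      (gdofA αb βb) (gdofB αb) (gdofE αb βb βa) (gdofG αb βa)) :
    ∃ ρ₀ : ℝ, 1 < ρ₀ ∧ ∀ ρ : ℝ, ρ₀ ≤ ρ →
      GenericRegion
        (fun j => da j * Real.logb 2 ρ) (fun j => db j * Real.logb 2 ρ)
        (innerA (fun j => ρ ^ (αa j)) (ρ ^ βa) (ρ ^ βb))
        (innerB (fun j => ρ ^ (αa j)) (ρ ^ βb))
        (innerE (fun j => ρ ^ (αa j)) (ρ ^ βa) (ρ ^ βb))
        (innerG (fun j => ρ ^ (αa j)) (ρ ^ βb))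
        (innerA (fun j => ρ ^ (αb j)) (ρ ^ βb) (ρ ^ βa))
        (innerB (fun j => ρ ^ (αb j)) (ρ ^ βa))
        (innerE (fun j => ρ ^ (αb j)) (ρ ^ βb) (ρ ^ βa))
        (innerG (fun j => ρ ^ (αb j)) (ρ ^ βa)) := by
  obtain ⟨ρ₁, hρ₁⟩ := eventually_atTop.1 (gdof_achievability_general αa αb hβa hβb hstrict)
  exact ⟨max ρ₁ 2, lt_max_of_lt_right one_lt_two, fun ρ hρ => hρ₁ ρ ((le_max_left ρ₁ 2).trans hρ)⟩
end
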